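/- Let the additive group ℝ^n act continuously and transitively on a nonempty locally compact Hausdorff second-countable topological space M, and suppose the stabilizer of some (equivalently, every) point is a discrete subgroup of ℝ^n of rank m. Then M is homeomorphic to ℝ^{n−m} × T^m, where T^m = (ℝ/ℤ)^m is the m-torus. -/

import Mathlib

theorem aux_extend_basis (n m : ℕ) (hm : m ≤ n) (b : Fin m → (Fin n → ℝ))
    (hb : LinearIndependent ℝ b) :
    ∃ B : Module.Basis (Fin (n - m) ⊕ Fin m) ℝ (Fin n → ℝ), ∀ i, B (Sum.inr i) = b i := by
  classical
  let B0 := Module.Basis.sumExtend hb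
  have : Finite (Fin m ⊕ Module.Basis.sumExtendIndex hb) := Module.Finite.finite_basis B0
  have : Finite (Module.Basis.sumExtendIndex hb) :=
    Finite.of_injective (Sum.inr : _ → Fin m ⊕ Module.Basis.sumExtendIndex hb) Sum.inr_injective
  have hc : Nat.card (Module.Basis.sumExtendIndex hb) = n - m := by
    have h1 := Module.finrank_eq_nat_card_basis B0
    rw [Nat.card_sum] at h1
    simp at h1
    rw [Nat.card_coe_set_eq]
    omega
  let e : Module.Basis.sumExtendIndex hb ≃ Fin (n - m) := Finite.equivFinOfCardEq hc
  refine ⟨B0.reindex ((Equiv.sumComm _ _).trans (Equiv.sumCongr e (Equiv.refl _))), ?_⟩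
  intro i
  simp [B0, Module.Basis.sumExtend]
  rfl

theorem homogeneous_space_of_real_action_homeomorph_cylinder (n m : ℕ) (hm : m ≤ n)
    (M : Type)
    [TopologicalSpace M] [T2Space M] [LocallyCompactSpace M] [SecondCountableTopology M]
    [Nonempty M] [AddAction (Fin n → ℝ) M]
    (hcont : Continuous fun p : (Fin n → ℝ) × M => p.1 +ᵥ p.2)
    (htrans : ∀ y z : M, ∃ g : Fin n → ℝ, g +ᵥ y = z) (x : M)
    (hdisc : DiscreteTopology (AddAction.stabilizer (Fin n → ℝ) x))
    (hrank : ∃ b : Fin m → (Fin n → ℝ),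
      LinearIndependent ℝ b ∧
      ∀ v : Fin n → ℝ, v ∈ AddAction.stabilizer (Fin n → ℝ) x ↔
        ∃ c : Fin m → ℤ, v = ∑ i : Fin m, (c i : ℝ) • b i) :
    Nonempty (M ≃ₜ ((Fin (n - m) → ℝ) × (Fin m → AddCircle (1 : ℝ)))) := by
  obtain ⟨b, hb, hstab⟩ := hrank
  obtain ⟨B, hB⟩ := aux_extend_basis n m hm b hb
  have : ContinuousVAdd (Fin n → ℝ) M := ⟨hcont⟩
  have : AddAction.IsPretransitive (Fin n → ℝ) M := ⟨htrans⟩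
  have hfo : IsOpenMap (fun g : Fin n → ℝ => g +ᵥ x) := isOpenMap_vadd_of_sigmaCompact x
  have hfc : Continuous (fun g : Fin n → ℝ => g +ᵥ x) := by fun_prop
  have hfs : Function.Surjective (fun g : Fin n → ℝ => g +ᵥ x) := fun z => htrans x z
  have hfq := (hfo.isQuotientMap hfc hfs)
  let E : (Fin n → ℝ) ≃ₜ (Fin (n - m) → ℝ) × (Fin m → ℝ) :=
    B.equivFunL.toHomeomorph.trans (Homeomorph.sumPiEquivProdPi (Fin (n - m)) (Fin m) fun _ => ℝ)
  let P : (Fin (n - m) → ℝ) × (Fin m → ℝ) → (Fin (n - m) → ℝ) × (Fin m → AddCircle (1 : ℝ)) :=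
    Prod.map id (Pi.map fun _ => ((↑) : ℝ → AddCircle (1 : ℝ)))
  have hP : IsOpenQuotientMap P := by
    refine IsOpenQuotientMap.prodMap .id (IsOpenQuotientMap.piMap fun _ => ?_)
    exact QuotientAddGroup.isOpenQuotientMap_mk
  have hPE : IsOpenQuotientMap (P ∘ E) := hP.comp E.isOpenQuotientMap
  have key : ∀ u v : Fin n → ℝ, u +ᵥ x = v +ᵥ x ↔ (P ∘ E) u = (P ∘ E) v := by
    intro u v
    have h1 : u +ᵥ x = v +ᵥ x ↔ u - v ∈ AddAction.stabilizer (Fin n → ℝ) x := by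
      rw [AddAction.mem_stabilizer_iff, sub_eq_neg_add, add_vadd, neg_vadd_eq_iff]
    have h2 : (P ∘ E) u = (P ∘ E) v ↔ (∀ j, B.repr u (Sum.inl j) = B.repr v (Sum.inl j)) ∧
        ∀ i, ((B.repr u (Sum.inr i) : ℝ) : AddCircle (1:ℝ)) = (B.repr v (Sum.inr i) : ℝ) := by
      rw [Prod.ext_iff, funext_iff, funext_iff]
      rfl
    rw [h1, h2, hstab]
    constructor
    · rintro ⟨c, hc⟩
      have h3 : u = v + ∑ i, (c i : ℝ) • B (Sum.inr i) := by
        simp only [hB]; rw [← hc]; abel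
      subst h3
      refine ⟨fun j => ?_, fun i => ?_⟩
      · simp [Finsupp.single_apply]
      · simp [Finsupp.single_apply]
    · rintro ⟨h3, h4⟩
      have h5 : ∀ i, ∃ c : ℤ, (c : ℝ) = B.repr u (Sum.inr i) - B.repr v (Sum.inr i) := by
        intro i
        have := h4 i
        rw [← sub_eq_zero, ← AddCircle.coe_sub, AddCircle.coe_eq_zero_iff] at this
        simpa using this
      choose c hc using h5
      refine ⟨c, ?_⟩
      rw [← B.sum_repr (u - v)]
      simp [Fintype.sum_sum_type, h3, hB, hc]
  let F : C(Fin n → ℝ, M) := ⟨_, hfc⟩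
  let G : C(Fin n → ℝ, (Fin (n - m) → ℝ) × (Fin m → AddCircle (1 : ℝ))) := ⟨_, hPE.continuous⟩
  have hF : Topology.IsQuotientMap F := hfq
  have hG : Topology.IsQuotientMap G := hPE.isQuotientMap
  have hker : Setoid.ker F = Setoid.ker G := Setoid.ext key
  have e1 := hF.homeomorph
  rw [hker] at e1
  exact ⟨e1.symm.trans hG.homeomorph⟩
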